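/- Let G ⊆ UT(n,ℝ) be a real unipotent group, P a real algebraic subgroup of G, and U ⊆ G a nonempty open subset of G (in the subspace topology). Suppose L is a real algebraic subgroup of G such that g⁻¹Pg ⊆ L for every g ∈ U, and L is contained in every real algebraic subgroup of G that contains g⁻¹Pg for every g ∈ U (i.e. L is the smallest real algebraic subgroup of G containing ⋃_{g∈U} g⁻¹Pg). Then L is normal in G; in particular L equals the smallest normal real algebraic subgroup of G containing P. -/

import Mathlib

open Pointwise Filter

noncomputable section

/-- Square matrices of size `n` over `R`. -/
abbrev Mat (n : ℕ) (R : Type) : Type := Matrix (Fin n) (Fin n) R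

/-- The set `UT(n,ℝ)` of upper triangular matrices with `1`s on the diagonal. -/
def UTset (n : ℕ) : Set (Mat n ℝ) :=
  {A | (∀ i, A i i = 1) ∧ ∀ i j : Fin n, (j : ℕ) < (i : ℕ) → A i j = 0}

/-- The entries of a matrix, as a point of `ℝ^(n²)`. -/
def matEval {n : ℕ} (A : Mat n ℝ) : Fin n × Fin n → ℝ := fun ij => A ij.1 ij.2

/-- A real unipotent group: a subgroup of `UT(n,ℝ)` which is the common zero set in
`UT(n,ℝ)` of a family of real polynomials in the matrix entries. -/
def IsRealUnipotentGroup (n : ℕ) (G : Set (Mat n ℝ)) : Prop :=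
  (∃ S : Set (MvPolynomial (Fin n × Fin n) ℝ),
      G = {A | A ∈ UTset n ∧ ∀ p ∈ S, MvPolynomial.eval (matEval A) p = 0}) ∧
    (1 : Mat n ℝ) ∈ G ∧ (∀ a ∈ G, ∀ b ∈ G, a * b ∈ G) ∧ ∀ a ∈ G, a⁻¹ ∈ G

/-- A real algebraic subgroup of a real unipotent group `G`. -/
def IsRealAlgSubgroup (n : ℕ) (G H : Set (Mat n ℝ)) : Prop :=
  H ⊆ G ∧ IsRealUnipotentGroup n H

/-- `N` is a normal subgroup-set of `G`. -/
def IsNormalIn (n : ℕ) (G N : Set (Mat n ℝ)) : Prop :=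
  ∀ g ∈ G, ∀ x ∈ N, g * x * g⁻¹ ∈ N

/-- `Γ` is a lattice in `G`: a discrete subgroup which is cocompact, i.e. there is a
compact `K ⊆ G` with `K·Γ = G` (equivalently, `G/Γ` is compact). -/
def IsLatticeIn (n : ℕ) (G Γ : Set (Mat n ℝ)) : Prop :=
  Γ ⊆ G ∧ (1 : Mat n ℝ) ∈ Γ ∧ (∀ a ∈ Γ, ∀ b ∈ Γ, a * b ∈ Γ) ∧ (∀ a ∈ Γ, a⁻¹ ∈ Γ) ∧
    DiscreteTopology ↥Γ ∧
    ∃ K : Set (Mat n ℝ), K ⊆ G ∧ IsCompact K ∧ ∀ g ∈ G, ∃ k ∈ K, ∃ γ ∈ Γ, g = k * γ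

/-- `H` is `Γ`-rational: `Γ ∩ H` is a lattice in `H`. -/
def IsRationalFor (n : ℕ) (Γ H : Set (Mat n ℝ)) : Prop :=
  IsLatticeIn n H (Γ ∩ H)

/-- The hyperreal matrix represented by a sequence of real matrices. -/
def matOfSeq (n : ℕ) (u : ℕ → Mat n ℝ) : Mat n Hyperreal :=
  Matrix.of fun i j => Hyperreal.ofSeq fun k => u k i j

/-- The nonstandard extension `S^♯` of a set `S` of real matrices: hyperreal matrices
represented by sequences landing in `S` on a set of indices in the ultrafilter. -/
def matSharp (n : ℕ) (S : Set (Mat n ℝ)) : Set (Mat n Hyperreal) :=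
  {A | ∃ u : ℕ → Mat n ℝ, (∀ᶠ k in hyperfilter ℕ, u k ∈ S) ∧ A = matOfSeq n u}

/-- The canonical embedding of real matrices into hyperreal matrices. -/
def matCast {n : ℕ} (A : Mat n ℝ) : Mat n Hyperreal :=
  Matrix.of fun i j => (A i j : Hyperreal)

/-- `μ(G)`: elements of `G^♯` all of whose entries are infinitesimally close to the
corresponding entries of the identity matrix. -/
def muSet (n : ℕ) (G : Set (Mat n ℝ)) : Set (Mat n Hyperreal) :=
  {A | A ∈ matSharp n G ∧ ∀ i j, Hyperreal.Infinitesimal (A i j - (1 : Mat n Hyperreal) i j)}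

/-- The coset `gH` is near `α`, i.e. `α ∈ μ(G)·g·H^♯`. -/
def NearCoset (n : ℕ) (G : Set (Mat n ℝ)) (g : Mat n ℝ) (H : Set (Mat n ℝ))
    (α : Mat n Hyperreal) : Prop :=
  α ∈ muSet n G * ({matCast g} * matSharp n H)

/-- The set of standard parts of the finite elements of a set of hyperreal matrices. -/
def matStSet (n : ℕ) (A : Set (Mat n Hyperreal)) : Set (Mat n ℝ) :=
  {B | ∃ a ∈ A, ∀ i j, Hyperreal.IsSt (a i j) (B i j)}

/-- A polynomial map `ℝ^d → Mat n ℝ`. -/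
def IsPolyMapVec (d n : ℕ) (F : (Fin d → ℝ) → Mat n ℝ) : Prop :=
  ∃ P : Fin n → Fin n → MvPolynomial (Fin d) ℝ,
    ∀ x i j, F x i j = MvPolynomial.eval x (P i j)

/-- The inclusion `ℝ →+* ℝ*` as a ring homomorphism. -/
def realHyperRingHom : ℝ →+* Hyperreal where
  toFun r := (r : Hyperreal)
  map_one' := Hyperreal.coe_one
  map_mul' := Hyperreal.coe_mul
  map_zero' := Hyperreal.coe_zero
  map_add' := Hyperreal.coe_add

/-- A semialgebraic subset of matrix space: a finite union of sets defined by finitely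
many polynomial equations and finitely many strict polynomial inequalities. -/
def IsSemialgebraic (n : ℕ) (S : Set (Mat n ℝ)) : Prop :=
  ∃ (k : ℕ) (P Q : Fin k → Finset (MvPolynomial (Fin n × Fin n) ℝ)),
    S = ⋃ t : Fin k, {A | (∀ p ∈ P t, MvPolynomial.eval (matEval A) p = 0) ∧
      ∀ q ∈ Q t, 0 < MvPolynomial.eval (matEval A) q}


/-!
A Euclidean-open piece `U` of a unipotent group `G` is Zariski dense in `G`: for `g₀ ∈ U` and
`g ∈ G` put `h = g₀⁻¹ * g`. Since `h - 1` is nilpotent, the binomial series makes `t ↦ h ^ t` a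
polynomial curve. It lies in `G` because it does so at every `t ∈ ℕ`, and `g₀ * h ^ t` runs
from `g₀` to `g`, staying in `U` for small `t`. A polynomial vanishing on `U` thus vanishes
infinitely often along this curve, hence also at `g`.

For fixed `x` the condition `g⁻¹ * x * g ∈ L` is polynomial in `g`, so if it holds on `U` it holds
on all of `G`. Then `L` contains all conjugates of `P`, and each conjugate of `L` contains them too,
so normality follows from minimality.
-/

section ZariskiClosed

variable {k l m n R : Type*}

/-- A Zariski closed set of matrices over `R`: the common zero set of a family of polynomials in the
matrix entries. -/
def IsZariskiClosed [CommSemiring R] (Z : Set (Matrix m n R)) : Prop :=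
  ∃ S : Set (MvPolynomial (m × n) R),
    Z = {A | ∀ p ∈ S, MvPolynomial.eval (fun ij => A ij.1 ij.2) p = 0}

/-- `U` is Zariski dense in `G`: every Zariski closed set containing `U` contains `G`. The inclusion
`U ⊆ G` is not part of the definition. -/
def IsZariskiDenseIn [CommSemiring R] (U G : Set (Matrix m n R)) : Prop :=
  ∀ Z : Set (Matrix m n R), IsZariskiClosed Z → U ⊆ Z → G ⊆ Z

lemma IsZariskiClosed.inter [CommSemiring R] {Y Z : Set (Matrix m n R)} (hY : IsZariskiClosed Y)
    (hZ : IsZariskiClosed Z) : IsZariskiClosed (Y ∩ Z) := by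
  obtain ⟨S, rfl⟩ := hY
  obtain ⟨T, rfl⟩ := hZ
  refine ⟨S ∪ T, ?_⟩
  ext A
  simp only [Set.mem_inter_iff, Set.mem_ofPred_eq, Set.mem_union, or_imp, forall_and]

lemma eval_map_algHom [CommSemiring R] {S : Type*} [CommSemiring S] [Algebra R S] (φ : S →ₐ[R] R)
    (F : Matrix m n S) (p : MvPolynomial (m × n) R) :
    MvPolynomial.eval (fun ij => F.map φ ij.1 ij.2) p =
      φ (MvPolynomial.aeval (fun ij => F ij.1 ij.2) p) := by
  rw [MvPolynomial.comp_aeval_apply, MvPolynomial.aeval_eq_eval]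
  rfl

lemma IsZariskiClosed.preimage [CommSemiring R] {Z : Set (Matrix k l R)} (hZ : IsZariskiClosed Z)
    (F : Matrix k l (MvPolynomial (m × n) R)) :
    IsZariskiClosed {A : Matrix m n R | F.map (MvPolynomial.eval fun ij => A ij.1 ij.2) ∈ Z} := by
  obtain ⟨S, rfl⟩ := hZ
  refine ⟨MvPolynomial.aeval (fun ij => F ij.1 ij.2) '' S, ?_⟩
  ext A
  have substitution := eval_map_algHom (MvPolynomial.aeval fun ij => A ij.1 ij.2) F
  simp only [MvPolynomial.aeval_eq_eval] at substitution
  simp only [Set.mem_ofPred_eq, Set.forall_mem_image]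
  exact forall₂_congr fun p _ => by rw [← substitution]

lemma IsZariskiClosed.map_eval_mem [CommRing R] [IsDomain R] {Z : Set (Matrix m n R)}
    (hZ : IsZariskiClosed Z) (Q : Matrix m n (Polynomial R)) {T : Set R} (hT : T.Infinite)
    (hTZ : ∀ t ∈ T, Q.map (Polynomial.eval t) ∈ Z) (t : R) : Q.map (Polynomial.eval t) ∈ Z := by
  obtain ⟨S, rfl⟩ := hZ
  intro p hp
  have substitution (s : R) := eval_map_algHom (Polynomial.aeval s) Q p
  simp only [Polynomial.coe_aeval_eq_eval] at substitution
  have hzero : MvPolynomial.aeval (fun ij => Q ij.1 ij.2) p = 0 :=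
    Polynomial.eq_zero_of_infinite_isRoot _
      (hT.mono fun s hs => (substitution s).symm.trans (hTZ s hs p hp))
  rw [substitution, hzero, Polynomial.eval_zero]

lemma map_C_map_eval {σ : Type*} [CommSemiring R] (a : Matrix m n R) (v : σ → R) :
    (a.map MvPolynomial.C).map (MvPolynomial.eval v) = a := by
  ext i j
  simp

lemma mvPolynomialX_map_eval [CommSemiring R] (A : Matrix m n R) :
    (Matrix.mvPolynomialX m n R).map (MvPolynomial.eval fun ij => A ij.1 ij.2) = A :=
  Matrix.mvPolynomialX_map_eval₂ (RingHom.id R) A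

lemma IsZariskiClosed.setOf_mul_mul_mem [CommSemiring R] [Fintype m] [Fintype n]
    {Z : Set (Matrix k l R)} (hZ : IsZariskiClosed Z) (a : Matrix k m R) (b : Matrix n l R) :
    IsZariskiClosed {A : Matrix m n R | a * A * b ∈ Z} := by
  let a' : Matrix k m (MvPolynomial (m × n) R) := a.map MvPolynomial.C
  let b' : Matrix n l (MvPolynomial (m × n) R) := b.map MvPolynomial.C
  simpa only [a', b', Matrix.map_mul, map_C_map_eval, mvPolynomialX_map_eval]
    using hZ.preimage (a' * Matrix.mvPolynomialX m n R * b')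

lemma IsZariskiClosed.setOf_adjugate_mul_mul_mem [CommRing R] [Fintype n] [DecidableEq n]
    {Z : Set (Matrix n n R)} (hZ : IsZariskiClosed Z) (x : Matrix n n R) :
    IsZariskiClosed {A | A.adjugate * x * A ∈ Z} := by
  let F : Matrix n n (MvPolynomial (n × n) R) :=
    (Matrix.mvPolynomialX n n R).adjugate * x.map MvPolynomial.C * Matrix.mvPolynomialX n n R
  have map_adjugate (A : Matrix n n R) : (Matrix.mvPolynomialX n n R).adjugate.map
      (MvPolynomial.eval fun ij => A ij.1 ij.2) = A.adjugate := by
    rw [← RingHom.mapMatrix_apply, RingHom.map_adjugate, Matrix.mvPolynomialX_mapMatrix_eval]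
  simpa only [F, Matrix.map_mul, map_C_map_eval, mvPolynomialX_map_eval, map_adjugate]
    using hZ.preimage F

end ZariskiClosed

section Unipotent

lemma pow_eq_sum_range_choose_nsmul_sub_one_pow {A : Type*} [Ring A] {a : A} {d : ℕ}
    (ha : (a - 1) ^ d = 0) (m : ℕ) :
    a ^ m = ∑ k ∈ Finset.range d, m.choose k • (a - 1) ^ k := by
  have binomial : a ^ m = ∑ k ∈ Finset.range (m + 1), m.choose k • (a - 1) ^ k := by
    simpa [nsmul_eq_mul, Nat.cast_comm] using (Commute.one_right (a - 1)).add_pow m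
  have vanish_of_lt : ∀ k ≥ m + 1, m.choose k • (a - 1) ^ k = 0 := fun k hk => by
    rw [Nat.choose_eq_zero_of_lt hk, zero_smul]
  have vanish_of_le : ∀ k ≥ d, m.choose k • (a - 1) ^ k = 0 := fun k hk => by
    rw [pow_eq_zero_of_le hk ha, smul_zero]
  rw [binomial, ← Finset.eventually_constant_sum vanish_of_lt (le_max_left (m + 1) d),
    Finset.eventually_constant_sum vanish_of_le (le_max_right (m + 1) d)]

lemma exists_polynomial_matrix_map_eval_natCast_eq_pow {n K : Type*} [Fintype n] [DecidableEq n]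
    [Field K] [CharZero K] {A : Matrix n n K} (hA : IsNilpotent (A - 1)) :
    ∃ Q : Matrix n n (Polynomial K), ∀ m : ℕ, Q.map (Polynomial.eval (m : K)) = A ^ m := by
  obtain ⟨d, hd⟩ := hA
  refine ⟨Matrix.of fun i j => ∑ k ∈ Finset.range d,
    descPochhammer K k * Polynomial.C (((A - 1) ^ k) i j / k.factorial), fun m => ?_⟩
  have choose_eq (k : ℕ) := Nat.cast_choose_eq_descPochhammer_div K m k
  ext i j
  simp only [pow_eq_sum_range_choose_nsmul_sub_one_pow hd m, Matrix.map_apply, Matrix.of_apply,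
    Polynomial.eval_finsetSum, Polynomial.eval_mul, Polynomial.eval_C, Matrix.sum_apply,
    Matrix.smul_apply, ← Nat.cast_smul_eq_nsmul K, smul_eq_mul, choose_eq]
  exact Finset.sum_congr rfl fun k _ => by ring

lemma isNilpotent_sub_one_of_isUpperTriangular {n R : Type*} [Fintype n] [LinearOrder n]
    [CommRing R] {A : Matrix n n R} (hA : A.IsUpperTriangular) (hdiag : ∀ i, A i i = 1) :
    IsNilpotent (A - 1) := by
  refine ⟨Fintype.card n, ?_⟩
  have cayleyHamilton := A.aeval_self_charpoly
  simpa [Matrix.charpoly_of_isUpperTriangular A hA, hdiag] using cayleyHamilton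

end Unipotent

section UnipotentGroup

variable {n : ℕ} {G : Set (Mat n ℝ)}

lemma isUpperTriangular_of_mem_UTset {A : Mat n ℝ} (hA : A ∈ UTset n) : A.IsUpperTriangular :=
  fun i j hij => hA.2 i j hij

lemma det_of_mem_UTset {A : Mat n ℝ} (hA : A ∈ UTset n) : A.det = 1 := by
  simp [Matrix.det_of_isUpperTriangular (isUpperTriangular_of_mem_UTset hA), hA.1]

lemma isZariskiClosed_UTset (n : ℕ) : IsZariskiClosed (UTset n) := by
  refine ⟨Set.range (fun i => MvPolynomial.X (i, i) - 1) ∪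
    {p | ∃ i j : Fin n, (j : ℕ) < (i : ℕ) ∧ p = MvPolynomial.X (i, j)}, ?_⟩
  ext A
  constructor
  · rintro ⟨hdiag, hlower⟩ p (⟨i, rfl⟩ | ⟨i, j, hij, rfl⟩)
    · simp [hdiag]
    · simpa using hlower i j hij
  · intro hA
    refine ⟨fun i => ?_, fun i j hij => ?_⟩
    · simpa [sub_eq_zero] using hA _ (Or.inl ⟨i, rfl⟩)
    · simpa using hA _ (Or.inr ⟨i, j, hij, rfl⟩)

lemma isRealUnipotentGroup_iff : IsRealUnipotentGroup n G ↔
    (G ⊆ UTset n ∧ IsZariskiClosed G) ∧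
      1 ∈ G ∧ (∀ a ∈ G, ∀ b ∈ G, a * b ∈ G) ∧ ∀ a ∈ G, a⁻¹ ∈ G := by
  refine and_congr_left fun _ => ⟨?_, ?_⟩
  · rintro ⟨S, rfl⟩
    exact ⟨fun A hA => hA.1, (isZariskiClosed_UTset n).inter ⟨S, rfl⟩⟩
  · rintro ⟨hUT, S, rfl⟩
    exact ⟨S, (Set.inter_eq_right.2 hUT).symm⟩

namespace IsRealUnipotentGroup

variable {g : Mat n ℝ}

lemma subset_UTset (hG : IsRealUnipotentGroup n G) : G ⊆ UTset n :=
  (isRealUnipotentGroup_iff.1 hG).1.1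

lemma isZariskiClosed (hG : IsRealUnipotentGroup n G) : IsZariskiClosed G :=
  (isRealUnipotentGroup_iff.1 hG).1.2

lemma one_mem (hG : IsRealUnipotentGroup n G) : 1 ∈ G := hG.2.1

lemma mul_mem (hG : IsRealUnipotentGroup n G) {a b : Mat n ℝ} (ha : a ∈ G) (hb : b ∈ G) :
    a * b ∈ G := hG.2.2.1 a ha b hb

lemma inv_mem (hG : IsRealUnipotentGroup n G) (hg : g ∈ G) : g⁻¹ ∈ G := hG.2.2.2 g hg

lemma pow_mem (hG : IsRealUnipotentGroup n G) (hg : g ∈ G) (m : ℕ) : g ^ m ∈ G := by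
  induction m with
  | zero => simpa using hG.one_mem
  | succ m ih => simpa only [pow_succ] using hG.mul_mem ih hg

lemma isUnit_det (hG : IsRealUnipotentGroup n G) (hg : g ∈ G) : IsUnit g.det := by
  rw [det_of_mem_UTset (hG.subset_UTset hg)]
  exact isUnit_one

lemma inv_eq_adjugate (hG : IsRealUnipotentGroup n G) (hg : g ∈ G) : g⁻¹ = g.adjugate := by
  simp [Matrix.inv_def, det_of_mem_UTset (hG.subset_UTset hg)]

lemma inv_inv (hG : IsRealUnipotentGroup n G) (hg : g ∈ G) : g⁻¹⁻¹ = g :=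
  Matrix.nonsing_inv_nonsing_inv g (hG.isUnit_det hg)

lemma exists_polynomial_matrix_map_eval_eq_pow (hG : IsRealUnipotentGroup n G) (hg : g ∈ G) :
    ∃ Q : Matrix (Fin n) (Fin n) (Polynomial ℝ),
      (∀ t : ℝ, Q.map (Polynomial.eval t) ∈ G) ∧
        ∀ m : ℕ, Q.map (Polynomial.eval (m : ℝ)) = g ^ m := by
  have hUT := hG.subset_UTset hg
  obtain ⟨Q, hQ⟩ := exists_polynomial_matrix_map_eval_natCast_eq_pow
    (isNilpotent_sub_one_of_isUpperTriangular (isUpperTriangular_of_mem_UTset hUT) hUT.1)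
  refine ⟨Q, hG.isZariskiClosed.map_eval_mem Q (Set.infinite_range_of_injective Nat.cast_injective)
    ?_, hQ⟩
  rintro _ ⟨m, rfl⟩
  rw [hQ]
  exact hG.pow_mem hg m

lemma isZariskiDenseIn_of_isOpen (hG : IsRealUnipotentGroup n G) {V : Set (Mat n ℝ)}
    (hV : IsOpen V) (hne : (V ∩ G).Nonempty) : IsZariskiDenseIn (V ∩ G) G := by
  intro Z hZ hVZ g hg
  obtain ⟨g₀, hg₀V, hg₀⟩ := hne
  obtain ⟨Q, hQG, hQ⟩ := hG.exists_polynomial_matrix_map_eval_eq_pow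
    (hG.mul_mem (hG.inv_mem hg₀) hg)
  have hQ_zero : Q.map (Polynomial.eval (0 : ℝ)) = 1 := by simpa using hQ 0
  have hQ_one : Q.map (Polynomial.eval (1 : ℝ)) = g₀⁻¹ * g := by simpa using hQ 1
  have hcont : Continuous fun t : ℝ => g₀ * Q.map (Polynomial.eval t) :=
    continuous_const.mul (continuous_matrix fun i j => (Q i j).continuous)
  have hinf : {t : ℝ | g₀ * Q.map (Polynomial.eval t) ∈ V}.Infinite :=
    infinite_of_mem_nhds 0 ((hV.preimage hcont).mem_nhds (by simpa [hQ_zero] using hg₀V))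
  have hmem := (hZ.setOf_mul_mul_mem g₀ 1).map_eval_mem Q hinf
    (fun t ht => hVZ (by simpa using ⟨ht, hG.mul_mem hg₀ (hQG t)⟩)) 1
  simpa [hQ_one, Matrix.mul_nonsing_inv_cancel_left _ _ (hG.isUnit_det hg₀)] using hmem

end IsRealUnipotentGroup

lemma IsZariskiDenseIn.inv_mul_mul_mem {U L : Set (Mat n ℝ)} (hU : IsZariskiDenseIn U G)
    (hG : IsRealUnipotentGroup n G) (hUG : U ⊆ G) (hL : IsZariskiClosed L) {x : Mat n ℝ}
    (hx : ∀ g ∈ U, g⁻¹ * x * g ∈ L) {g : Mat n ℝ} (hg : g ∈ G) : g⁻¹ * x * g ∈ L := by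
  rw [hG.inv_eq_adjugate hg]
  refine hU _ (hL.setOf_adjugate_mul_mul_mem x) (fun u hu => ?_) hg
  rw [Set.mem_ofPred_eq, ← hG.inv_eq_adjugate (hUG hu)]
  exact hx u hu

lemma IsRealAlgSubgroup.setOf_conj_mem {L : Set (Mat n ℝ)} (hG : IsRealUnipotentGroup n G)
    (hL : IsRealAlgSubgroup n G L) {h : Mat n ℝ} (hh : h ∈ G) :
    IsRealAlgSubgroup n G {x | h * x * h⁻¹ ∈ L} := by
  have hdet := hG.isUnit_det hh
  have hsub : {x | h * x * h⁻¹ ∈ L} ⊆ G := fun x hx => by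
    have hconj := hG.mul_mem (hG.mul_mem (hG.inv_mem hh) (hL.1 hx)) hh
    simpa only [mul_assoc, Matrix.nonsing_inv_mul_cancel_left _ _ hdet,
      Matrix.nonsing_inv_mul _ hdet, mul_one] using hconj
  refine ⟨hsub, isRealUnipotentGroup_iff.2 ⟨⟨hsub.trans hG.subset_UTset,
    hL.2.isZariskiClosed.setOf_mul_mul_mem h h⁻¹⟩, ?_, fun a ha b hb => ?_, fun a ha => ?_⟩⟩
  · simpa [Matrix.mul_nonsing_inv _ hdet] using hL.2.one_mem
  · simpa only [Set.mem_ofPred_eq, mul_assoc, Matrix.nonsing_inv_mul_cancel_left _ _ hdet]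
      using hL.2.mul_mem ha hb
  · simpa only [Set.mem_ofPred_eq, Matrix.mul_inv_rev, hG.inv_inv hh, mul_assoc]
      using hL.2.inv_mem ha

end UnipotentGroup

theorem stmt14_general {n : ℕ} {G P U L : Set (Mat n ℝ)} (hG : IsRealUnipotentGroup n G)
    (hUG : U ⊆ G) (hU : IsZariskiDenseIn U G) (hL : IsRealAlgSubgroup n G L)
    (hconj : ∀ g ∈ U, ∀ x ∈ P, g⁻¹ * x * g ∈ L)
    (hLmin : ∀ M : Set (Mat n ℝ), IsRealAlgSubgroup n G M →
      (∀ g ∈ U, ∀ x ∈ P, g⁻¹ * x * g ∈ M) → L ⊆ M) :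
    IsNormalIn n G L ∧ P ⊆ L ∧
      ∀ M : Set (Mat n ℝ), IsRealAlgSubgroup n G M → IsNormalIn n G M → P ⊆ M → L ⊆ M := by
  have hconjG : ∀ g ∈ G, ∀ x ∈ P, g⁻¹ * x * g ∈ L := fun g hg x hx =>
    hU.inv_mul_mul_mem hG hUG hL.2.isZariskiClosed (fun u hu => hconj u hu x hx) hg
  refine ⟨fun h hh => ?_, fun x hx => ?_, fun M hM hMnormal hPM => ?_⟩
  · refine hLmin _ (hL.setOf_conj_mem hG hh) fun g hg x hx => ?_
    change h * (g⁻¹ * x * g) * h⁻¹ ∈ L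
    simpa only [Matrix.mul_inv_rev, hG.inv_inv hh, mul_assoc]
      using hconjG (g * h⁻¹) (hG.mul_mem (hUG hg) (hG.inv_mem hh)) x hx
  · simpa using hconjG 1 hG.one_mem x hx
  · refine hLmin M hM fun g hg x hx => ?_
    simpa only [hG.inv_inv (hUG hg)] using hMnormal g⁻¹ (hG.inv_mem (hUG hg)) x (hPM hx)

/-- the smallest real algebraic subgroup containing all conjugates
`g⁻¹Pg`, `g ∈ U` (`U` open and nonempty in `G`) is normal in `G`, and equals the
smallest normal real algebraic subgroup containing `P`. -/
theorem stmt14 {n : ℕ} (G P U L : Set (Mat n ℝ)) (hG : IsRealUnipotentGroup n G)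
    (hP : IsRealAlgSubgroup n G P) (hUG : U ⊆ G) (hUne : U.Nonempty)
    (hUopen : ∃ V : Set (Mat n ℝ), IsOpen V ∧ U = V ∩ G)
    (hL : IsRealAlgSubgroup n G L)
    (hconj : ∀ g ∈ U, ∀ x ∈ P, g⁻¹ * x * g ∈ L)
    (hLmin : ∀ M : Set (Mat n ℝ), IsRealAlgSubgroup n G M →
      (∀ g ∈ U, ∀ x ∈ P, g⁻¹ * x * g ∈ M) → L ⊆ M) :
    IsNormalIn n G L ∧ P ⊆ L ∧
      ∀ M : Set (Mat n ℝ), IsRealAlgSubgroup n G M → IsNormalIn n G M → P ⊆ M → L ⊆ M := by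
  obtain ⟨V, hV, rfl⟩ := hUopen
  exact stmt14_general hG hUG (hG.isZariskiDenseIn_of_isOpen hV hUne) hL hconj hLmin
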